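/- The function B(t) = −t² φ0(i/t) + (36/π²) ψ_I(it) satisfies B(t) > 0 for every real t ∈ (0, ∞). (Here φ0(i/t) and ψ_I(it) are real, so B is real-valued.) -/

import Mathlib

open MeasureTheory

/-- Weight 2 Eisenstein series (quasimodular), via its `q`-expansion. -/
noncomputable def E2 (z : ℂ) : ℂ :=
  1 - 24 * ∑' n : ℕ+, ((ArithmeticFunction.sigma 1 n : ℕ) : ℂ) *
    Complex.exp (2 * (Real.pi : ℂ) * Complex.I * n * z)

/-- Weight 4 Eisenstein series, via its `q`-expansion. -/
noncomputable def E4 (z : ℂ) : ℂ :=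
  1 + 240 * ∑' n : ℕ+, ((ArithmeticFunction.sigma 3 n : ℕ) : ℂ) *
    Complex.exp (2 * (Real.pi : ℂ) * Complex.I * n * z)

/-- Weight 6 Eisenstein series, via its `q`-expansion. -/
noncomputable def E6 (z : ℂ) : ℂ :=
  1 - 504 * ∑' n : ℕ+, ((ArithmeticFunction.sigma 5 n : ℕ) : ℂ) *
    Complex.exp (2 * (Real.pi : ℂ) * Complex.I * n * z)

/-- The elliptic `j`-invariant. -/
noncomputable def jInv (z : ℂ) : ℂ := 1728 * E4 z ^ 3 / (E4 z ^ 3 - E6 z ^ 2)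

/-- The weakly holomorphic modular form `varphi_{-2}`. -/
noncomputable def varphim2 (z : ℂ) : ℂ := -1728 * E4 z * E6 z / (E4 z ^ 3 - E6 z ^ 2)

/-- The weakly holomorphic modular form `varphi_{-4}`. -/
noncomputable def varphim4 (z : ℂ) : ℂ := 1728 * E4 z ^ 2 / (E4 z ^ 3 - E6 z ^ 2)

/-- `φ_{-4} = varphi_{-4}`. -/
noncomputable def phim4 (z : ℂ) : ℂ := varphim4 z

/-- `φ_{-2} = varphi_{-4}·E2 + varphi_{-2}`. -/
noncomputable def phim2 (z : ℂ) : ℂ := varphim4 z * E2 z + varphim2 z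

/-- `φ_0 = varphi_{-4}·E2² + 2·varphi_{-2}·E2 + j − 1728`. -/
noncomputable def phi0 (z : ℂ) : ℂ :=
  varphim4 z * E2 z ^ 2 + 2 * varphim2 z * E2 z + jInv z - 1728
/-- The theta constant `θ00`. -/
noncomputable def theta00 (z : ℂ) : ℂ :=
  ∑' n : ℤ, Complex.exp ((Real.pi : ℂ) * Complex.I * (n : ℂ) ^ 2 * z)

/-- The theta constant `θ01`. -/
noncomputable def theta01 (z : ℂ) : ℂ :=
  ∑' n : ℤ, (-1 : ℂ) ^ n * Complex.exp ((Real.pi : ℂ) * Complex.I * (n : ℂ) ^ 2 * z)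

/-- The theta constant `θ10`. -/
noncomputable def theta10 (z : ℂ) : ℂ :=
  ∑' n : ℤ, Complex.exp ((Real.pi : ℂ) * Complex.I * ((n : ℂ) + 1/2) ^ 2 * z)

/-- `ψ_I = 128(θ00⁴+θ01⁴)/θ10⁸ + 128(θ01⁴−θ10⁴)/θ00⁸`. -/
noncomputable def psiI (z : ℂ) : ℂ :=
  128 * (theta00 z ^ 4 + theta01 z ^ 4) / theta10 z ^ 8 +
    128 * (theta01 z ^ 4 - theta10 z ^ 4) / theta00 z ^ 8

/-- `ψ_T = 128(θ00⁴+θ01⁴)/θ10⁸ + 128(θ00⁴+θ10⁴)/θ01⁸`. -/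
noncomputable def psiT (z : ℂ) : ℂ :=
  128 * (theta00 z ^ 4 + theta01 z ^ 4) / theta10 z ^ 8 +
    128 * (theta00 z ^ 4 + theta10 z ^ 4) / theta01 z ^ 8

/-- `ψ_S = −128(θ00⁴+θ10⁴)/θ01⁸ − 128(θ10⁴−θ01⁴)/θ00⁸`. -/
noncomputable def psiS (z : ℂ) : ℂ :=
  -128 * (theta00 z ^ 4 + theta10 z ^ 4) / theta01 z ^ 8 -
    128 * (theta10 z ^ 4 - theta01 z ^ 4) / theta00 z ^ 8

/-- `B(t) = −t²φ₀(i/t) + (36/π²)ψ_I(it)`. -/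
noncomputable def Bfn (t : ℝ) : ℂ :=
  -(t : ℂ) ^ 2 * phi0 (Complex.I / (t : ℂ)) + (36 / (Real.pi : ℂ) ^ 2) * psiI (Complex.I * (t : ℂ))


/-! ## Real series on the imaginary axis -/

noncomputable def Ssum (k : ℕ) (q : ℝ) : ℝ :=
  ∑' n : ℕ, ((ArithmeticFunction.sigma k (n + 1) : ℕ) : ℝ) * q ^ (n + 1)

lemma Ssum_cast (k : ℕ) (s : ℝ) :
    ∑' n : ℕ+, ((ArithmeticFunction.sigma k n : ℕ) : ℂ) *
      Complex.exp (2 * (Real.pi : ℂ) * Complex.I * n * (Complex.I * (s : ℂ))) =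
    ((Ssum k (Real.exp (-2 * Real.pi * s)) : ℝ) : ℂ) := by
  rw [tsum_pnat_eq_tsum_succ (f := fun n : ℕ => ((ArithmeticFunction.sigma k n : ℕ) : ℂ) *
      Complex.exp (2 * (Real.pi : ℂ) * Complex.I * n * (Complex.I * (s : ℂ))))]
  rw [Ssum, Complex.ofReal_tsum]
  refine tsum_congr fun n => ?_
  push_cast
  rw [← Complex.exp_nat_mul]
  congr 2
  push_cast
  linear_combination (2 * (Real.pi : ℂ) * (n + 1) * s) * Complex.I_mul_I

lemma E2_axis (s : ℝ) : E2 (Complex.I * s) =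
    ((1 - 24 * Ssum 1 (Real.exp (-2 * Real.pi * s)) : ℝ) : ℂ) := by
  rw [E2, Ssum_cast]; push_cast; ring

lemma E4_axis (s : ℝ) : E4 (Complex.I * s) =
    ((1 + 240 * Ssum 3 (Real.exp (-2 * Real.pi * s)) : ℝ) : ℂ) := by
  rw [E4, Ssum_cast]; push_cast; ring

lemma E6_axis (s : ℝ) : E6 (Complex.I * s) =
    ((1 - 504 * Ssum 5 (Real.exp (-2 * Real.pi * s)) : ℝ) : ℂ) := by
  rw [E6, Ssum_cast]; push_cast; ring

/-! ## S-transformations -/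

lemma E2_eq_mathlib (z : UpperHalfPlane) : E2 z = EisensteinSeries.E2 z := by
  rw [EisensteinSeries.E2_eq_tsum_cexp, E2]
  congr 2
  refine tsum_congr fun n => ?_
  rw [← Complex.exp_nat_mul]
  congr 2
  ring

lemma E4_eq_mathlib (z : UpperHalfPlane) : E4 z = ModularForm.E (k := 4) (by norm_num) z := by
  rw [EisensteinSeries.q_expansion_bernoulli _ (by decide), E4]
  have : (bernoulli 4 : ℚ) = -1 / 30 := by
    rw [bernoulli_eq_bernoulli'_of_ne_one (by norm_num), bernoulli'_four]
  rw [this]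
  have h2 : ∀ n : ℕ+, ((ArithmeticFunction.sigma 3 n : ℕ) : ℂ) *
    Complex.exp (2 * (Real.pi : ℂ) * Complex.I * n * z) =
    ((ArithmeticFunction.sigma (4 - 1) n : ℕ) : ℂ) * Complex.exp (2 * Real.pi * Complex.I * z) ^ (n : ℤ) := by
    intro n
    rw [zpow_natCast, ← Complex.exp_nat_mul]
    congr 2
    ring
  simp_rw [h2]
  push_cast
  ring

lemma bern6 : (bernoulli 6 : ℚ) = 1 / 42 := by
  rw [bernoulli_eq_bernoulli'_of_ne_one (by norm_num), bernoulli'_def]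
  have h5 : bernoulli' 5 = 0 := bernoulli'_eq_zero_of_odd (by decide) (by norm_num)
  simp [Finset.sum_range_succ, h5, Nat.choose]
  norm_num

lemma E6_eq_mathlib (z : UpperHalfPlane) : E6 z = ModularForm.E (k := 6) (by norm_num) z := by
  rw [EisensteinSeries.q_expansion_bernoulli _ (by decide), E6]
  rw [bern6]
  have h2 : ∀ n : ℕ+, ((ArithmeticFunction.sigma 5 n : ℕ) : ℂ) *
    Complex.exp (2 * (Real.pi : ℂ) * Complex.I * n * z) =
    ((ArithmeticFunction.sigma (6 - 1) n : ℕ) : ℂ) * Complex.exp (2 * Real.pi * Complex.I * z) ^ (n : ℤ) := by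
    intro n
    rw [zpow_natCast, ← Complex.exp_nat_mul]
    congr 2
    ring
  simp_rw [h2]
  push_cast
  ring

lemma Ek_S {k : ℕ} (hk : 3 ≤ k) (z : UpperHalfPlane) :
    ModularForm.E hk (ModularGroup.S • z) = (z : ℂ) ^ k * ModularForm.E hk z := by
  have h := SlashInvariantForm.slash_action_eqn' (Γ := (Matrix.SpecialLinearGroup.mapGL ℝ).range)
    (ModularForm.E hk)
    (γ := Matrix.SpecialLinearGroup.mapGL ℝ ModularGroup.S) ⟨_, rfl⟩ z
  have h2 : (Matrix.SpecialLinearGroup.mapGL ℝ ModularGroup.S) • z = ModularGroup.S • z := rfl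
  rw [h2] at h
  have e0 : ((Matrix.SpecialLinearGroup.mapGL ℝ ModularGroup.S : Matrix.GeneralLinearGroup (Fin 2) ℝ)
      : Matrix (Fin 2) (Fin 2) ℝ) 1 0 = 1 := by
    simp [Matrix.SpecialLinearGroup.mapGL_coe_matrix, ModularGroup.coe_S]
  have e1 : ((Matrix.SpecialLinearGroup.mapGL ℝ ModularGroup.S : Matrix.GeneralLinearGroup (Fin 2) ℝ)
      : Matrix (Fin 2) (Fin 2) ℝ) 1 1 = 0 := by
    simp [Matrix.SpecialLinearGroup.mapGL_coe_matrix, ModularGroup.coe_S]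
  rw [h, e0, e1]
  simp

lemma S_axis (t : ℝ) (ht : 0 < t) (z : UpperHalfPlane) (hz : (z : ℂ) = Complex.I * t) :
    ((ModularGroup.S • z : UpperHalfPlane) : ℂ) = Complex.I / t := by
  have ht' : (t : ℂ) ≠ 0 := by exact_mod_cast ht.ne'
  rw [UpperHalfPlane.modular_S_smul]
  simp only [hz]
  rw [inv_eq_iff_eq_inv, inv_div]
  field_simp
  linear_combination -Complex.I_sq

lemma E4_S (t : ℝ) (ht : 0 < t) : E4 (Complex.I / t) = (t : ℂ) ^ 4 * E4 (Complex.I * t) := by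
  let z : UpperHalfPlane := ⟨Complex.I * t, by simpa using ht⟩
  have hz : (z : ℂ) = Complex.I * t := rfl
  rw [← S_axis t ht z hz, ← hz, E4_eq_mathlib, E4_eq_mathlib, Ek_S, hz, mul_pow, Complex.I_pow_four,
    one_mul]

lemma E6_S (t : ℝ) (ht : 0 < t) : E6 (Complex.I / t) = -(t : ℂ) ^ 6 * E6 (Complex.I * t) := by
  let z : UpperHalfPlane := ⟨Complex.I * t, by simpa using ht⟩
  have hz : (z : ℂ) = Complex.I * t := rfl
  have h6 : Complex.I ^ 6 = -1 := by
    rw [show 6 = 4 + 2 from rfl, pow_add, Complex.I_pow_four, Complex.I_sq]; ring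
  rw [← S_axis t ht z hz, ← hz, E6_eq_mathlib, E6_eq_mathlib, Ek_S, hz, mul_pow, h6]
  ring

lemma E2_S (t : ℝ) (ht : 0 < t) : E2 (Complex.I / t) =
    -(t : ℂ) ^ 2 * E2 (Complex.I * t) + 6 * t / Real.pi := by
  let z : UpperHalfPlane := ⟨Complex.I * t, by simpa using ht⟩
  have hz : (z : ℂ) = Complex.I * t := rfl
  have ht' : (t : ℂ) ≠ 0 := by exact_mod_cast ht.ne'
  have hp : (Real.pi : ℂ) ≠ 0 := by exact_mod_cast Real.pi_ne_zero
  have h := EisensteinSeries.G2_S_transform z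
  rw [← S_axis t ht z hz, ← hz, E2_eq_mathlib, E2_eq_mathlib]
  simp only [EisensteinSeries.E2, Pi.smul_apply, smul_eq_mul]
  rw [h, hz, riemannZeta_two, mul_pow, Complex.I_sq]
  have hI := Complex.I_ne_zero
  field_simp
  ring

/-! ## Theta functions on the imaginary axis -/

noncomputable def R00 (s : ℝ) : ℝ := ∑' n : ℤ, Real.exp (-Real.pi * s) ^ (n.natAbs ^ 2)
noncomputable def R01 (s : ℝ) : ℝ :=
  ∑' n : ℤ, (-1) ^ n.natAbs * Real.exp (-Real.pi * s) ^ (n.natAbs ^ 2)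
noncomputable def R10 (s : ℝ) : ℝ := ∑' n : ℤ, Real.exp (-Real.pi * s * ((n : ℝ) + 1 / 2) ^ 2)

lemma natAbs_sq_cast (n : ℤ) : ((n.natAbs ^ 2 : ℕ) : ℂ) = (n : ℂ) ^ 2 := by
  have : ((n.natAbs ^ 2 : ℕ) : ℤ) = n ^ 2 := by simp
  have h2 := congrArg (Int.cast : ℤ → ℂ) this
  rwa [Int.cast_natCast, Int.cast_pow] at h2

lemma term_cast (s : ℝ) (n : ℤ) :
    Complex.exp ((Real.pi : ℂ) * Complex.I * (n : ℂ) ^ 2 * (Complex.I * s)) =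
      ((Real.exp (-Real.pi * s) ^ (n.natAbs ^ 2) : ℝ) : ℂ) := by
  push_cast
  rw [← Complex.exp_nat_mul, natAbs_sq_cast]
  congr 1
  linear_combination (Real.pi * (n : ℂ) ^ 2 * s) * Complex.I_mul_I

lemma neg_one_zpow_natAbs (n : ℤ) : (-1 : ℂ) ^ n = (-1) ^ n.natAbs := by
  obtain ⟨m, h | h⟩ := Int.eq_nat_or_neg n
  · rw [h, zpow_natCast, Int.natAbs_natCast]
  · rw [h, zpow_neg, zpow_natCast, Int.natAbs_neg, Int.natAbs_natCast, ← inv_pow]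
    norm_num

lemma theta00_axis (s : ℝ) : theta00 (Complex.I * s) = (R00 s : ℂ) := by
  rw [theta00, R00, Complex.ofReal_tsum]
  exact tsum_congr fun n => term_cast s n

lemma theta01_axis (s : ℝ) : theta01 (Complex.I * s) = (R01 s : ℂ) := by
  rw [theta01, R01, Complex.ofReal_tsum]
  refine tsum_congr fun n => ?_
  rw [term_cast, neg_one_zpow_natAbs]
  push_cast
  rfl

lemma theta10_axis (s : ℝ) : theta10 (Complex.I * s) = (R10 s : ℂ) := by
  rw [theta10, R10, Complex.ofReal_tsum]
  refine tsum_congr fun n => ?_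
  push_cast
  congr 1
  linear_combination (Real.pi * ((n : ℂ) + 1 / 2) ^ 2 * s) * Complex.I_mul_I

lemma theta00_eq (z : ℂ) : theta00 z = jacobiTheta₂ 0 z := by
  rw [theta00, jacobiTheta₂]
  refine tsum_congr fun n => ?_
  simp [jacobiTheta₂_term]

lemma theta01_eq (z : ℂ) : theta01 z = jacobiTheta₂ (1 / 2) z := by
  rw [theta01, jacobiTheta₂]
  refine tsum_congr fun n => ?_
  rw [jacobiTheta₂_term, Complex.exp_add,
    show 2 * (Real.pi : ℂ) * Complex.I * n * (1 / 2) = n * (Real.pi * Complex.I) by ring,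
    Complex.exp_int_mul, Complex.exp_pi_mul_I]

lemma theta10_eq (z : ℂ) : theta10 z =
    Complex.exp (Real.pi * Complex.I * z / 4) * jacobiTheta₂ (z / 2) z := by
  rw [theta10, jacobiTheta₂, ← tsum_mul_left]
  refine tsum_congr fun n => ?_
  rw [jacobiTheta₂_term, ← Complex.exp_add]
  congr 1
  ring

lemma cpow_four (s : ℝ) (_hs : 0 < s) :
    ((-Complex.I * (Complex.I * s)) ^ (1 / 2 : ℂ)) ^ 4 = (s : ℂ) ^ 2 := by
  rw [show -Complex.I * (Complex.I * s) = (s : ℂ) by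
    linear_combination (-(s : ℂ)) * Complex.I_mul_I]
  rw [← Complex.cpow_nat_mul]
  norm_num

lemma cpow_ne (s : ℝ) (hs : 0 < s) :
    ((-Complex.I * (Complex.I * s)) ^ (1 / 2 : ℂ)) ≠ 0 := by
  intro h
  have := cpow_four s hs
  rw [h] at this
  have hs' : (s : ℂ) ≠ 0 := by exact_mod_cast hs.ne'
  have : (s : ℂ) ^ 2 = 0 := by rw [← this]; norm_num
  exact hs' (by simpa using this)

lemma neg_inv_axis (s : ℝ) (hs : 0 < s) : -1 / (Complex.I * s) = Complex.I / (s : ℂ) := by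
  have hs' : (s : ℂ) ≠ 0 := by exact_mod_cast hs.ne'
  have hI := Complex.I_ne_zero
  field_simp
  linear_combination -Complex.I_sq

lemma theta00_S (s : ℝ) (hs : 0 < s) :
    theta00 (Complex.I / s) ^ 4 = (s : ℂ) ^ 2 * theta00 (Complex.I * s) ^ 4 := by
  have h := jacobiTheta₂_functional_equation 0 (Complex.I * s)
  rw [neg_inv_axis s hs] at h
  simp only [zero_div, ne_eq, OfNat.ofNat_ne_zero, not_false_eq_true, zero_pow, mul_zero,
    Complex.exp_zero, mul_one] at h
  rw [theta00_eq, theta00_eq, h, mul_pow, div_pow, cpow_four s hs]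
  have hs' : (s : ℂ) ≠ 0 := by exact_mod_cast hs.ne'
  field_simp

lemma theta10_S (s : ℝ) (hs : 0 < s) :
    theta10 (Complex.I / s) ^ 4 = (s : ℂ) ^ 2 * theta01 (Complex.I * s) ^ 4 := by
  have h := jacobiTheta₂_functional_equation (1 / 2) (Complex.I * s)
  have hs' : (s : ℂ) ≠ 0 := by exact_mod_cast hs.ne'
  have hI := Complex.I_ne_zero
  rw [neg_inv_axis s hs] at h
  have e1 : (1 / 2 : ℂ) / (Complex.I * s) = -(Complex.I / s / 2) := by
    rw [← neg_inv_axis s hs]; ring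
  have e2 : -(Real.pi : ℂ) * Complex.I * (1 / 2) ^ 2 / (Complex.I * s) =
      Real.pi * Complex.I * (Complex.I / s) / 4 := by
    rw [← neg_inv_axis s hs]; ring
  rw [e1, e2, jacobiTheta₂_neg_left, mul_assoc, ← theta10_eq, ← theta01_eq] at h
  rw [h, mul_pow, div_pow, cpow_four s hs]
  field_simp

lemma theta01_S (s : ℝ) (hs : 0 < s) :
    theta01 (Complex.I / s) ^ 4 = (s : ℂ) ^ 2 * theta10 (Complex.I * s) ^ 4 := by
  have h := theta10_S (1 / s) (by positivity)
  have hs' : (s : ℂ) ≠ 0 := by exact_mod_cast hs.ne'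
  have e1 : Complex.I / ((1 / s : ℝ) : ℂ) = Complex.I * s := by push_cast; field_simp
  have e2 : Complex.I * ((1 / s : ℝ) : ℂ) = Complex.I / s := by push_cast; field_simp
  rw [e1, e2] at h
  rw [h]
  push_cast
  field_simp

/-! ## Bounds -/

lemma summable_R00 (s : ℝ) (hs : 0 < s) :
    Summable fun n : ℤ => Real.exp (-Real.pi * s) ^ (n.natAbs ^ 2) := by
  rw [← Complex.summable_ofReal]
  have h := (summable_jacobiTheta₂_term_iff 0 (Complex.I * s)).2 (by simpa using hs)
  refine h.congr fun n => ?_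
  rw [← term_cast, jacobiTheta₂_term]
  simp

lemma summable_R01 (s : ℝ) (hs : 0 < s) :
    Summable fun n : ℤ => (-1 : ℝ) ^ n.natAbs * Real.exp (-Real.pi * s) ^ (n.natAbs ^ 2) := by
  refine Summable.of_norm ?_
  refine (summable_R00 s hs).congr fun n => ?_
  rw [norm_mul, norm_pow]
  simp [abs_of_pos (Real.exp_pos _)]

lemma summable_R10 (s : ℝ) (hs : 0 < s) :
    Summable fun n : ℤ => Real.exp (-Real.pi * s * ((n : ℝ) + 1 / 2) ^ 2) := by
  rw [← Complex.summable_ofReal]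
  have h := (summable_jacobiTheta₂_term_iff (Complex.I * s / 2) (Complex.I * s)).2 (by simpa using hs)
  refine (h.mul_left (Complex.exp (Real.pi * Complex.I * (Complex.I * s) / 4))).congr fun n => ?_
  rw [jacobiTheta₂_term, ← Complex.exp_add]
  push_cast
  congr 1
  linear_combination (Real.pi * ((n : ℂ) + 1 / 2) ^ 2 * s) * Complex.I_mul_I

lemma R00_lower (s : ℝ) (hs : 0 < s) : 1 + 2 * Real.exp (-Real.pi * s) ≤ R00 s := by
  have h := (summable_R00 s hs).hasSum.nat_add_neg
  have h2 := sum_le_hasSum (Finset.range 2) (fun n _ => by positivity) h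
  simp [Finset.sum_range_succ] at h2
  simp only [R00]
  simp
  linarith

lemma R01_bounds (s : ℝ) (hs : 0 < s) (p : ℝ) (hp : p = Real.exp (-Real.pi * s)) (hp1 : p < 1) :
    |R01 s - (1 - 2 * p)| ≤ 2 * p ^ 4 / (1 - p ^ 2) := by
  have h := (summable_R01 s hs).hasSum.nat_add_neg
  rw [← hasSum_nat_add_iff' 2] at h
  have hp0 : 0 < p := hp ▸ Real.exp_pos _
  have hp2 : p ^ 2 < 1 := by nlinarith
  have hg := (hasSum_geometric_of_lt_one (r := p ^ 2) (by positivity) hp2).mul_left (2 * p ^ 4)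
  have hn : ∀ n : ℕ, p ^ ((n + 2) ^ 2) ≤ p ^ 4 * (p ^ 2) ^ n := by
    intro n
    rw [← pow_mul, ← pow_add]
    exact pow_le_pow_of_le_one hp0.le hp1.le (by nlinarith)
  rw [← hp] at h
  have hval : ∀ n : ℕ, (-1 : ℝ) ^ (((n + 2 : ℕ) : ℤ)).natAbs * p ^ ((((n + 2 : ℕ) : ℤ)).natAbs ^ 2) +
      (-1 : ℝ) ^ (-((n + 2 : ℕ) : ℤ)).natAbs * p ^ ((-((n + 2 : ℕ) : ℤ)).natAbs ^ 2) =
      2 * ((-1) ^ (n + 2) * p ^ ((n + 2) ^ 2)) := by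
    intro n
    rw [Int.natAbs_neg, Int.natAbs_natCast]
    ring
  simp_rw [hval] at h
  have hb : ∀ n : ℕ, |2 * ((-1) ^ (n + 2) * p ^ ((n + 2) ^ 2))| ≤ 2 * p ^ 4 * (p ^ 2) ^ n := by
    intro n
    rw [abs_mul, abs_mul, abs_pow, abs_neg, abs_one, one_pow, one_mul, abs_of_pos (by positivity),
      abs_of_pos (by positivity)]
    linarith [hn n]
  have hu := hasSum_le (fun n => (abs_le.1 (hb n)).2) h hg
  have hl := hasSum_le (fun n => (abs_le.1 (hb n)).1) hg.neg h
  simp [Finset.sum_range_succ] at hu hl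
  rw [R01, ← hp, abs_le, div_eq_mul_inv]
  constructor <;> linarith

lemma R10_bounds (s : ℝ) (hs : 0 < s) (p : ℝ) (hp : p = Real.exp (-Real.pi * s)) (hp1 : p < 1) :
    ∃ r : ℝ, 0 < r ∧ r ^ 4 = p ∧ 2 * r ≤ R10 s ∧ R10 s ≤ 2 * r / (1 - p ^ 2) := by
  have h := (summable_R10 s hs).hasSum.nat_add_neg_add_one
  have hp0 : 0 < p := hp ▸ Real.exp_pos _
  have hp2 : p ^ 2 < 1 := by nlinarith
  refine ⟨Real.exp (-Real.pi * s / 4), Real.exp_pos _, ?_, ?_⟩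
  · rw [hp, ← Real.exp_nat_mul]; congr 1; push_cast; ring
  set r := Real.exp (-Real.pi * s / 4) with hr
  have hval : ∀ n : ℕ, Real.exp (-Real.pi * s * (((n : ℤ) : ℝ) + 1 / 2) ^ 2) +
      Real.exp (-Real.pi * s * (((-((n : ℤ) + 1) : ℤ) : ℝ) + 1 / 2) ^ 2) = 2 * r * p ^ (n * (n + 1)) := by
    intro n
    rw [hp, hr, ← Real.exp_nat_mul, mul_assoc 2, ← Real.exp_add, two_mul]
    congr 2 <;> push_cast <;> ring
  simp_rw [hval] at h
  have hg := (hasSum_geometric_of_lt_one (r := p ^ 2) (by positivity) hp2).mul_left (2 * r)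
  have hr0 : 0 < r := Real.exp_pos _
  constructor
  · have h2 := sum_le_hasSum (Finset.range 1) (fun n _ => by positivity) h
    simpa [R10] using h2
  · rw [div_eq_mul_inv]
    refine hasSum_le (fun n => ?_) h hg
    refine mul_le_mul_of_nonneg_left ?_ (by positivity)
    rw [← pow_mul]
    refine pow_le_pow_of_le_one hp0.le hp1.le ?_
    rcases n with _ | n
    · simp
    · nlinarith

lemma Ssum_bounds (k : ℕ) (q : ℝ) (hq : 0 < q) (hk : 2 ^ (k + 1) * q < 1) :
    q + (1 + 2 ^ k) * q ^ 2 ≤ Ssum k q ∧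
    Ssum k q ≤ q + (1 + 2 ^ k) * q ^ 2 + (2 ^ (k + 1)) ^ 2 * q ^ 3 / (1 - 2 ^ (k + 1) * q) := by
  set A : ℝ := 2 ^ (k + 1) with hA
  have hA0 : 0 < A := by positivity
  have hb : ∀ n : ℕ, ((ArithmeticFunction.sigma k (n + 1) : ℕ) : ℝ) * q ^ (n + 1) ≤
      q * (A * q) ^ n := by
    intro n
    have h1 : ArithmeticFunction.sigma k (n + 1) ≤ (2 ^ (k + 1)) ^ n := by
      refine (ArithmeticFunction.sigma_le_pow_succ k (n + 1)).trans ?_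
      rw [← pow_mul, mul_comm (k + 1), pow_mul]
      exact Nat.pow_le_pow_left (Nat.lt_two_pow_self) _
    have h2 : ((ArithmeticFunction.sigma k (n + 1) : ℕ) : ℝ) ≤ A ^ n := by
      rw [hA]; exact_mod_cast h1
    calc _ ≤ A ^ n * q ^ (n + 1) := mul_le_mul_of_nonneg_right h2 (by positivity)
      _ = _ := by rw [mul_pow]; ring
  have hg := (hasSum_geometric_of_lt_one (r := A * q) (by positivity) hk).mul_left q
  have hs : Summable fun n : ℕ => ((ArithmeticFunction.sigma k (n + 1) : ℕ) : ℝ) * q ^ (n + 1) :=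
    Summable.of_nonneg_of_le (fun n => by positivity) hb hg.summable
  have h := hs.hasSum
  have s1 : ArithmeticFunction.sigma k 1 = 1 := ArithmeticFunction.sigma_one k
  have s2 : ArithmeticFunction.sigma k 2 = 1 + 2 ^ k := by
    rw [ArithmeticFunction.sigma_apply, Nat.Prime.divisors Nat.prime_two]
    simp
  constructor
  · have h2 := sum_le_hasSum (Finset.range 2) (fun n _ => by positivity) h
    simp [Finset.sum_range_succ, s1, s2] at h2
    exact h2
  · rw [← hasSum_nat_add_iff' 2] at h hg
    have := hasSum_le (fun n => hb (n + 2)) h hg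
    simp [Finset.sum_range_succ, s1, s2] at this
    rw [Ssum]
    have h1 : 0 < 1 - A * q := by linarith
    have e : q * (1 - A * q)⁻¹ - (q + q * (A * q)) = A ^ 2 * q ^ 3 / (1 - A * q) := by
      rw [eq_div_iff h1.ne', sub_mul, mul_assoc, inv_mul_cancel₀ h1.ne']; ring
    linarith

/-! ## Numerics -/

lemma exp_bound (s : ℝ) (hs : 1 ≤ s) : s * Real.exp (-Real.pi * s) ≤ 0.0434 := by
  have hpi := Real.pi_gt_d6
  have h1 : (23.05 : ℝ) ≤ Real.exp Real.pi := by
    have e1 := Real.exp_one_gt_d9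
    have h : Real.exp (3 * 1 + 0.14) ≤ Real.exp Real.pi := Real.exp_le_exp.2 (by linarith)
    have h14 := Real.quadratic_le_exp_of_nonneg (x := 0.14) (by norm_num)
    have h3 : (2.7182818283 : ℝ) ^ 3 ≤ Real.exp 1 ^ 3 := pow_le_pow_left₀ (by norm_num) e1.le 3
    have h3' : Real.exp (3 * 1) = Real.exp 1 ^ 3 := by
      rw [← Real.exp_nat_mul]; norm_num
    rw [Real.exp_add, h3'] at h
    have : (2.7182818283 : ℝ) ^ 3 * (1 + 0.14 + 0.14 ^ 2 / 2) ≤ Real.exp 1 ^ 3 * Real.exp 0.14 :=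
      mul_le_mul h3 h14 (by norm_num) (by positivity)
    refine le_trans ?_ (this.trans h)
    norm_num
  have h2 : s ≤ Real.exp (Real.pi * (s - 1)) := by
    have := Real.add_one_le_exp (Real.pi * (s - 1))
    nlinarith
  have h3 : 23.05 * s ≤ Real.exp (Real.pi * s) := by
    have : Real.exp (Real.pi * s) = Real.exp Real.pi * Real.exp (Real.pi * (s - 1)) := by
      rw [← Real.exp_add]; congr 1; ring
    rw [this]
    exact mul_le_mul h1 h2 (by linarith) (by positivity)
  rw [neg_mul, Real.exp_neg, ← div_eq_mul_inv, div_le_iff₀ (Real.exp_pos _)]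
  nlinarith

/-- Bounds for the Eisenstein part. -/
lemma eis_bounds (q : ℝ) (hq : 0 < q) (hq1 : q ≤ 0.00189) (e2 e4 e6 : ℝ)
    (h2 : e2 = 1 - 24 * Ssum 1 q) (h4 : e4 = 1 + 240 * Ssum 3 q) (h6 : e6 = 1 - 504 * Ssum 5 q) :
    e4 ≤ 1 + 240 * q + 2280 * q ^ 2 ∧ 1 ≤ e4 ∧
    720 * q ≤ e2 * e4 - e6 ∧ e2 * e4 - e6 ≤ 720 * q * (1 + 25 * q) ∧
    1728 * q * (1 - 30 * q) ≤ e4 ^ 3 - e6 ^ 2 := by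
  obtain ⟨a1, a2⟩ := Ssum_bounds 1 q hq (by norm_num; linarith)
  obtain ⟨b1, b2⟩ := Ssum_bounds 3 q hq (by norm_num; linarith)
  obtain ⟨c1, c2⟩ := Ssum_bounds 5 q hq (by norm_num; linarith)
  set a := Ssum 1 q
  set b := Ssum 3 q
  set c := Ssum 5 q
  norm_num at a1 a2 b1 b2 c1 c2
  have hqq : 0 < q ^ 2 := by positivity
  have a3 : a ≤ q + 3.1 * q ^ 2 := by
    have : 16 * q ^ 3 / (1 - 4 * q) ≤ 0.1 * q ^ 2 := by
      rw [div_le_iff₀ (by linarith)]; nlinarith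
    linarith
  have b3 : b ≤ q + 9.5 * q ^ 2 := by
    have : 256 * q ^ 3 / (1 - 16 * q) ≤ 0.5 * q ^ 2 := by
      rw [div_le_iff₀ (by linarith)]; nlinarith
    linarith
  have c3 : c ≤ q + 42 * q ^ 2 := by
    have : 4096 * q ^ 3 / (1 - 64 * q) ≤ 9 * q ^ 2 := by
      rw [div_le_iff₀ (by linarith)]; nlinarith
    linarith
  have ha : q ≤ a := by nlinarith
  have hb : q ≤ b := by nlinarith
  have hc : q ≤ c := by nlinarith
  have hab1 : q ^ 2 ≤ a * b := by
    rw [sq]; exact mul_le_mul ha hb hq.le (by linarith)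
  have hab2 : a * b ≤ 1.1 * q ^ 2 := by
    calc a * b ≤ (1.01 * q) * (1.02 * q) :=
          mul_le_mul (by nlinarith) (by nlinarith) (by linarith) (by linarith)
      _ ≤ _ := by nlinarith
  have hK : e2 * e4 - e6 = 240 * b - 24 * a - 5760 * (a * b) + 504 * c := by
    rw [h2, h4, h6]; ring
  have hD : e4 ^ 3 - e6 ^ 2 = 720 * b + 1008 * c + 172800 * b ^ 2 - 254016 * c ^ 2 +
      13824000 * b ^ 3 := by
    rw [h4, h6]; ring
  refine ⟨by rw [h4]; linarith, by rw [h4]; linarith, ?_, ?_, ?_⟩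
  · rw [hK]; nlinarith
  · rw [hK]; nlinarith
  · rw [hD]
    have hb2 : (q + 9 * q ^ 2) ^ 2 ≤ b ^ 2 := pow_le_pow_left₀ (by positivity) b1 2
    have hb3 : q ^ 3 ≤ b ^ 3 := pow_le_pow_left₀ hq.le hb 3
    have hc2 : c ^ 2 ≤ (q + 42 * q ^ 2) ^ 2 := pow_le_pow_left₀ (by linarith) c3 2
    have key : 1728 * q * (1 - 30 * q) ≤ 720 * (q + 9 * q ^ 2) + 1008 * (q + 33 * q ^ 2) +
        172800 * (q + 9 * q ^ 2) ^ 2 - 254016 * (q + 42 * q ^ 2) ^ 2 + 13824000 * q ^ 3 := by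
      have : 0 ≤ q ^ 2 * ((51840 - 41472) - 4403000 * q - 449000000 * q ^ 2) := by
        apply mul_nonneg hqq.le
        nlinarith
      nlinarith [pow_pos hq 3, pow_pos hq 4]
    linarith

lemma tail_bound (p : ℝ) (hp : 0 < p) (hp1 : p ≤ 0.0434) :
    2 * p ^ 4 / (1 - p ^ 2) ≤ 0.004 * p ^ 2 := by
  have h : p ^ 2 ≤ 0.0434 ^ 2 := pow_le_pow_left₀ hp.le hp1 2
  norm_num at h
  rw [div_le_iff₀ (by linarith)]
  have : 0 ≤ p ^ 2 * (0.004 - 2.004 * p ^ 2) := mul_nonneg (by positivity) (by linarith)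
  linarith

set_option maxHeartbeats 2000000 in
lemma caseA (t p q e2 e4 e6 a b c r D : ℝ) (ht : 1 ≤ t) (hp : 0 < p) (htp : t * p ≤ 0.0434)
    (hqp : q = p ^ 2)
    (h4 : e4 ≤ 1 + 240 * q + 2280 * q ^ 2) (h41 : 1 ≤ e4)
    (hK1 : 720 * q ≤ e2 * e4 - e6) (hK2 : e2 * e4 - e6 ≤ 720 * q * (1 + 25 * q))
    (hDD : D = e4 ^ 3 - e6 ^ 2)
    (hD : 1728 * q * (1 - 30 * q) ≤ D)
    (ha : 1 + 2 * p ≤ a) (hb : |b - (1 - 2 * p)| ≤ 2 * p ^ 4 / (1 - p ^ 2))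
    (hr : 0 < r) (hrp : r ^ 4 = p) (hc1 : 2 * r ≤ c) (hc2 : c ≤ 2 * r / (1 - p ^ 2)) :
    0 < -(1728 * (t * (e2 * e4 - e6) - 6 / Real.pi * e4) ^ 2 / D) +
      36 / Real.pi ^ 2 * (128 * (a ^ 4 + b ^ 4) / c ^ 8 + 128 * (b ^ 4 - c ^ 4) / a ^ 8) := by
  have hpi1 := Real.pi_gt_d6
  have hpi2 := Real.pi_lt_d6
  have hp1 : p ≤ 0.0434 := by nlinarith only [ht, hp, htp]
  have hq : 0 < q := by rw [hqp]; positivity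
  have hq1 : q ≤ 0.00189 := by rw [hqp]; nlinarith
  have htq : t * q ≤ 0.00189 := by rw [hqp]; nlinarith only [ht, hp, htp, hp1, mul_le_mul_of_nonneg_right htp hp.le]
  set K := e2 * e4 - e6 with hKdef
  set u := e4 - Real.pi / 6 * t * K with hu
  have hu1 : u ≤ 1 - 132 * q := by
    have h1 : q ≤ t * q := by nlinarith only [hq, ht]
    have h2 : 720 * q ≤ t * K := by nlinarith
    have h3 : 3.1415 / 6 * (720 * q) ≤ Real.pi / 6 * (t * K) :=
      mul_le_mul (by linarith) h2 (by positivity) (by positivity)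
    nlinarith
  have hu0 : 0 ≤ u := by
    have h2 : t * K ≤ 1.5 := by
      have : t * K ≤ t * (720 * q * (1 + 25 * q)) := mul_le_mul_of_nonneg_left hK2 (by linarith)
      nlinarith
    have h3 : Real.pi / 6 * (t * K) ≤ 3.15 / 6 * 1.5 :=
      mul_le_mul (by linarith) h2 (by nlinarith) (by norm_num)
    nlinarith
  have hu2 : u ^ 2 ≤ 1 - 231 * q := by
    have : u ^ 2 ≤ (1 - 132 * q) ^ 2 := pow_le_pow_left₀ hu0 hu1 2
    nlinarith
  have hD0 : 0 < 1728 * q * (1 - 30 * q) := by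
    apply mul_pos (by positivity); linarith
  have hL : 1728 * u ^ 2 / D ≤ (1 - 231 * q) / (q * (1 - 30 * q)) := by
    calc 1728 * u ^ 2 / D ≤ 1728 * (1 - 231 * q) / (1728 * q * (1 - 30 * q)) :=
          div_le_div₀ (by nlinarith) (by linarith) hD0 hD
      _ = _ := by rw [mul_assoc, mul_div_mul_left _ _ (by norm_num)]
  -- theta part
  have hb1' : 1 - 2 * p - 0.004 * p ^ 2 ≤ b := by
    linarith [(abs_le.1 hb).1, tail_bound p hp hp1]
  have hab : 2 ≤ a ^ 4 + b ^ 4 := by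
    have h1 : (1 + 2 * p) ^ 4 ≤ a ^ 4 := pow_le_pow_left₀ (by positivity) ha 4
    have h2 : (1 - 2 * p - 0.004 * p ^ 2) ^ 4 ≤ b ^ 4 :=
      pow_le_pow_left₀ (by nlinarith only [hp, hp1]) hb1' 4
    have h3 : 1 - 4 * (2 * p + 0.004 * p ^ 2) ≤ (1 - 2 * p - 0.004 * p ^ 2) ^ 4 := by
      have := one_add_mul_le_pow (a := - (2 * p + 0.004 * p ^ 2)) (by nlinarith only [hp, hp1]) 4
      push_cast at this
      calc _ = 1 + 4 * -(2 * p + 0.004 * p ^ 2) := by ring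
        _ ≤ _ := this
        _ = _ := by ring
    nlinarith only [h1, h2, h3, pow_pos hp 2, pow_pos hp 3, pow_pos hp 4]
  have hc0 : 0 < c := by linarith
  have hc4 : c ^ 4 ≤ 16 * p / (1 - q) ^ 4 := by
    calc c ^ 4 ≤ (2 * r / (1 - p ^ 2)) ^ 4 := pow_le_pow_left₀ hc0.le hc2 4
      _ = _ := by rw [div_pow, mul_pow, hrp, hqp]; norm_num
  have hq4 : 1 - 4 * q ≤ (1 - q) ^ 4 := by
    have := one_add_mul_le_pow (a := -q) (by linarith) 4
    push_cast at this
    calc _ = 1 + 4 * -q := by ring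
        _ ≤ _ := this
        _ = _ := by ring
  have hc4' : c ^ 4 ≤ 0.7 := by
    refine hc4.trans ?_
    rw [div_le_iff₀ (by linarith)]
    linarith
  have hc8 : c ^ 8 ≤ 256 * q / (1 - 4 * q) ^ 2 := by
    calc c ^ 8 = (c ^ 4) ^ 2 := by ring
      _ ≤ (16 * p / (1 - q) ^ 4) ^ 2 := pow_le_pow_left₀ (by positivity) hc4 2
      _ ≤ (16 * p / (1 - 4 * q)) ^ 2 := by
          refine pow_le_pow_left₀ (by positivity) ?_ 2
          exact div_le_div_of_nonneg_left (by positivity) (by linarith) hq4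
      _ = _ := by rw [div_pow, hqp]; ring
  have hT1 : (1 - 4 * q) ^ 2 / q ≤ 128 * (a ^ 4 + b ^ 4) / c ^ 8 := by
    rw [div_le_div_iff₀ hq (by positivity)]
    rw [le_div_iff₀ (by have : 0 < 1 - 4 * q := by linarith
                        positivity)] at hc8
    have := mul_le_mul_of_nonneg_right hab hq.le
    linarith
  have ha8 : 1 ≤ a ^ 8 := one_le_pow₀ (by linarith)
  have hT2 : -90 ≤ 128 * (b ^ 4 - c ^ 4) / a ^ 8 := by
    rw [le_div_iff₀ (by positivity)]
    have : 0 ≤ b ^ 4 := by positivity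
    linarith
  have hfin : (1 - 231 * q) / (q * (1 - 30 * q)) < (1 - 4 * q) ^ 2 / q - 90 := by
    have h30 : 0 < 1 - 30 * q := by linarith
    rw [div_lt_iff₀ (by positivity)]
    have : ((1 - 4 * q) ^ 2 / q - 90) * (q * (1 - 30 * q)) =
        ((1 - 4 * q) ^ 2 - 90 * q) * (1 - 30 * q) := by
      field_simp
    rw [this]
    nlinarith only [hq, hq1, pow_pos hq 2, pow_pos hq 3]
  have hsq : 1728 * (t * K - 6 / Real.pi * e4) ^ 2 / D = 36 / Real.pi ^ 2 * (1728 * u ^ 2 / D) := by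
    rw [hu]
    have := Real.pi_pos.ne'
    field_simp
    ring
  rw [hsq, ← sub_eq_neg_add, ← mul_sub]
  apply mul_pos (by positivity)
  linarith

lemma caseB (p q e2 e4 e6 a b c r D : ℝ) (hp : 0 < p) (hp1 : p ≤ 0.0434)
    (hqp : q = p ^ 2)
    (hK1 : 720 * q ≤ e2 * e4 - e6) (hK2 : e2 * e4 - e6 ≤ 720 * q * (1 + 25 * q))
    (hD : 1728 * q * (1 - 30 * q) ≤ D)
    (ha : 1 + 2 * p ≤ a) (hb : |b - (1 - 2 * p)| ≤ 2 * p ^ 4 / (1 - p ^ 2))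
    (hr : 0 < r) (hrp : r ^ 4 = p) (hc1 : 2 * r ≤ c) :
    0 < -(1728 * (e2 * e4 - e6) ^ 2 / D) +
      36 / Real.pi ^ 2 * (128 * (a ^ 4 + c ^ 4) / b ^ 8 + 128 * (c ^ 4 - b ^ 4) / a ^ 8) := by
  have hpi1 := Real.pi_gt_d6
  have hpi2 := Real.pi_lt_d6
  have hq : 0 < q := by rw [hqp]; positivity
  have hq1 : q ≤ 0.00189 := by rw [hqp]; nlinarith
  set K := e2 * e4 - e6 with hKdef
  have h30 : 0 < 1 - 30 * q := by linarith
  have hL : 1728 * K ^ 2 / D ≤ 27000 * p := by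
    have h1 : K ^ 2 ≤ (720 * q * (1 + 25 * q)) ^ 2 := pow_le_pow_left₀ (by linarith) hK2 2
    calc 1728 * K ^ 2 / D ≤ 1728 * (720 * q * (1 + 25 * q)) ^ 2 / (1728 * q * (1 - 30 * q)) :=
          div_le_div₀ (by positivity) (by linarith) (by positivity) hD
      _ = 518400 * q * (1 + 25 * q) ^ 2 / (1 - 30 * q) := by field_simp; ring
      _ ≤ 622000 * q := by
          rw [div_le_iff₀ h30]
          have : 518400 * (1 + 25 * q) ^ 2 ≤ 622000 * (1 - 30 * q) := by nlinarith
          nlinarith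
      _ ≤ 27000 * p := by rw [hqp]; nlinarith
  have hbe : 2 * p ^ 4 / (1 - p ^ 2) ≤ 0.01 * p := by
    refine (tail_bound p hp hp1).trans ?_
    nlinarith only [hp, hp1]
  have hb1 : b ≤ 1 - 1.99 * p := by linarith [(abs_le.1 hb).2]
  have hb0 : 0 < b := by linarith [(abs_le.1 hb).1]
  have ha4 : 1 + 8 * p ≤ a ^ 4 := by
    have h1 : (1 + 2 * p) ^ 4 ≤ a ^ 4 := pow_le_pow_left₀ (by positivity) ha 4
    nlinarith [pow_pos hp 2, pow_pos hp 3, pow_pos hp 4]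
  have hc4 : 16 * p ≤ c ^ 4 := by
    calc 16 * p = (2 * r) ^ 4 := by rw [mul_pow, hrp]; norm_num
      _ ≤ c ^ 4 := pow_le_pow_left₀ (by positivity) hc1 4
  have hb4 : b ^ 4 ≤ 1 - 6.9 * p := by
    have h1 : b ^ 4 ≤ (1 - 1.99 * p) ^ 4 := pow_le_pow_left₀ hb0.le hb1 4
    have h2 : (1 - 1.99 * p) ^ 2 ≤ 1 - 3.8 * p := by nlinarith
    have h3 : ((1 - 1.99 * p) ^ 2) ^ 2 ≤ (1 - 3.8 * p) ^ 2 := pow_le_pow_left₀ (by positivity) h2 2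
    nlinarith
  have hb8 : b ^ 8 ≤ (1 - 6.9 * p) ^ 2 := by
    calc b ^ 8 = (b ^ 4) ^ 2 := by ring
      _ ≤ _ := pow_le_pow_left₀ (by positivity) hb4 2
  have hT1 : 128 * (1 + 37 * p) ≤ 128 * (a ^ 4 + c ^ 4) / b ^ 8 := by
    rw [le_div_iff₀ (by positivity)]
    have h1 : (1 + 37 * p) * b ^ 8 ≤ (1 + 37 * p) * (1 - 6.9 * p) ^ 2 :=
      mul_le_mul_of_nonneg_left hb8 (by positivity)
    have h2 : (1 + 37 * p) * (1 - 6.9 * p) ^ 2 ≤ 1 + 24 * p := by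
      nlinarith only [hp, hp1, pow_pos hp 2, pow_pos hp 3]
    linarith
  have ha8 : 1 ≤ a ^ 8 := one_le_pow₀ (by linarith)
  have hT2 : -128 * (1 - 22.9 * p) ≤ 128 * (c ^ 4 - b ^ 4) / a ^ 8 := by
    rw [le_div_iff₀ (by positivity)]
    have h1 : 0 ≤ 1 - 22.9 * p := by linarith
    have h2 : (1 - 22.9 * p) * 1 ≤ (1 - 22.9 * p) * a ^ 8 := mul_le_mul_of_nonneg_left ha8 h1
    linarith
  have hpi : 466 / 128 ≤ 36 / Real.pi ^ 2 := by
    rw [div_le_div_iff₀ (by norm_num) (by positivity)]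
    nlinarith only [hpi1, hpi2]
  have hM : 36 / Real.pi ^ 2 * (128 * (59 * p)) ≤
      36 / Real.pi ^ 2 * (128 * (a ^ 4 + c ^ 4) / b ^ 8 + 128 * (c ^ 4 - b ^ 4) / a ^ 8) := by
    apply mul_le_mul_of_nonneg_left _ (by positivity)
    linarith
  have hM2 : 466 / 128 * (128 * (59 * p)) ≤ 36 / Real.pi ^ 2 * (128 * (59 * p)) :=
    mul_le_mul_of_nonneg_right hpi (by positivity)
  linarith

lemma axis_div (t : ℝ) : Complex.I / (t : ℂ) = Complex.I * ((1 / t : ℝ) : ℂ) := by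
  push_cast; ring

lemma phi0_real (z : ℂ) (e2 e4 e6 : ℂ) (h2 : E2 z = e2) (h4 : E4 z = e4) (h6 : E6 z = e6)
    (hD : e4 ^ 3 - e6 ^ 2 ≠ 0) :
    phi0 z = 1728 * (e2 * e4 - e6) ^ 2 / (e4 ^ 3 - e6 ^ 2) := by
  rw [phi0, varphim4, varphim2, jInv, h2, h4, h6]
  field_simp
  ring

lemma q_eq (s : ℝ) : Real.exp (-2 * Real.pi * s) = Real.exp (-Real.pi * s) ^ 2 := by
  rw [← Real.exp_nat_mul]; congr 1; push_cast; ring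

/-- The function `B(t) = −t²φ₀(i/t) + (36/π²)ψ_I(it)` is real-valued and satisfies `B(t) > 0`
for every `t ∈ (0, ∞)`. -/
theorem Bfn_pos (t : ℝ) (ht : 0 < t) : (Bfn t).im = 0 ∧ 0 < (Bfn t).re := by
  obtain ⟨x, hx, hB⟩ : ∃ x : ℝ, 0 < x ∧ Bfn t = (x : ℂ) := by
    have ht' : (t : ℂ) ≠ 0 := by exact_mod_cast ht.ne'
    have hpi' : (Real.pi : ℂ) ≠ 0 := by exact_mod_cast Real.pi_ne_zero
    rcases le_total 1 t with h1 | h1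
    · have htp := exp_bound t h1
      have hp : 0 < Real.exp (-Real.pi * t) := Real.exp_pos _
      have hp1 : Real.exp (-Real.pi * t) ≤ 0.0434 := by nlinarith
      have hq1 : Real.exp (-2 * Real.pi * t) ≤ 0.00189 := by rw [q_eq]; nlinarith
      have hq : 0 < Real.exp (-2 * Real.pi * t) := Real.exp_pos _
      obtain ⟨b1, b2, b3, b4, b5⟩ := eis_bounds _ hq hq1 _ _ _ rfl rfl rfl
      obtain ⟨r, r0, r1, r2, r3⟩ := R10_bounds t ht _ rfl (by linarith)
      have key := caseA t _ _ _ _ _ _ _ _ r _ h1 hp htp (q_eq t) b1 b2 b3 b4 rfl b5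
        (R00_lower t ht) (R01_bounds t ht _ rfl (by linarith)) r0 r1 r2 r3
      refine ⟨_, key, ?_⟩
      have hD0 : 0 < 1728 * Real.exp (-2 * Real.pi * t) * (1 - 30 * Real.exp (-2 * Real.pi * t)) :=
        mul_pos (by positivity) (by linarith)
      have hE2 := E2_axis t
      have hE4 := E4_axis t
      have hE6 := E6_axis t
      set e2 := 1 - 24 * Ssum 1 (Real.exp (-2 * Real.pi * t))
      set e4 := 1 + 240 * Ssum 3 (Real.exp (-2 * Real.pi * t))
      set e6 := 1 - 504 * Ssum 5 (Real.exp (-2 * Real.pi * t))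
      have hD : (e4 : ℂ) ^ 3 - (e6 : ℂ) ^ 2 ≠ 0 := by
        have : e4 ^ 3 - e6 ^ 2 ≠ 0 := by linarith
        exact_mod_cast this
      have hS2 := E2_S t ht
      have hS4 := E4_S t ht
      have hS6 := E6_S t ht
      rw [hE2] at hS2
      rw [hE4] at hS4
      rw [hE6] at hS6
      have hD' : ((t : ℂ) ^ 4 * (e4 : ℂ)) ^ 3 - (-(t : ℂ) ^ 6 * (e6 : ℂ)) ^ 2 ≠ 0 := by
        have : ((t : ℂ) ^ 4 * (e4 : ℂ)) ^ 3 - (-(t : ℂ) ^ 6 * (e6 : ℂ)) ^ 2 =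
          (t : ℂ) ^ 12 * ((e4 : ℂ) ^ 3 - (e6 : ℂ) ^ 2) := by ring
        rw [this]
        exact mul_ne_zero (pow_ne_zero _ ht') hD
      rw [Bfn, phi0_real _ _ _ _ hS2 hS4 hS6 hD', psiI, theta00_axis, theta01_axis, theta10_axis]
      push_cast
      congr 1
      have : ((t : ℂ) ^ 4 * (e4 : ℂ)) ^ 3 - (-(t : ℂ) ^ 6 * (e6 : ℂ)) ^ 2 =
          (t : ℂ) ^ 12 * ((e4 : ℂ) ^ 3 - (e6 : ℂ) ^ 2) := by ring
      rw [this]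
      field_simp
      ring
    · obtain ⟨s, hs, hs1, hst⟩ : ∃ s : ℝ, 0 < s ∧ 1 ≤ s ∧ t = 1 / s :=
        ⟨1 / t, by positivity, by rw [le_div_iff₀ ht]; linarith, by simp⟩
      have hs' : (s : ℂ) ≠ 0 := by exact_mod_cast hs.ne'
      have htp := exp_bound s hs1
      have hp : 0 < Real.exp (-Real.pi * s) := Real.exp_pos _
      have hp1 : Real.exp (-Real.pi * s) ≤ 0.0434 := by nlinarith
      have hq1 : Real.exp (-2 * Real.pi * s) ≤ 0.00189 := by rw [q_eq]; nlinarith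
      have hq : 0 < Real.exp (-2 * Real.pi * s) := Real.exp_pos _
      obtain ⟨b1, b2, b3, b4, b5⟩ := eis_bounds _ hq hq1 _ _ _ rfl rfl rfl
      obtain ⟨r, r0, r1, r2, r3⟩ := R10_bounds s hs _ rfl (by linarith)
      have key := caseB _ _ _ _ _ _ _ _ r _ hp hp1 (q_eq s) b3 b4 b5
        (R00_lower s hs) (R01_bounds s hs _ rfl (by linarith)) r0 r1 r2
      refine ⟨t ^ 2 * _, mul_pos (by positivity) key, ?_⟩
      have hD0 : 0 < 1728 * Real.exp (-2 * Real.pi * s) * (1 - 30 * Real.exp (-2 * Real.pi * s)) :=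
        mul_pos (by positivity) (by linarith)
      have hE2 := E2_axis s
      have hE4 := E4_axis s
      have hE6 := E6_axis s
      set e2 := 1 - 24 * Ssum 1 (Real.exp (-2 * Real.pi * s))
      set e4 := 1 + 240 * Ssum 3 (Real.exp (-2 * Real.pi * s))
      set e6 := 1 - 504 * Ssum 5 (Real.exp (-2 * Real.pi * s))
      have hD : (e4 : ℂ) ^ 3 - (e6 : ℂ) ^ 2 ≠ 0 := by
        have : e4 ^ 3 - e6 ^ 2 ≠ 0 := by linarith
        exact_mod_cast this
      have e1 : Complex.I / (t : ℂ) = Complex.I * s := by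
        rw [hst]; push_cast; field_simp
      have e2' : Complex.I * (t : ℂ) = Complex.I / s := by
        rw [hst]; push_cast; field_simp
      rw [Bfn, e1, e2', phi0_real _ _ _ _ hE2 hE4 hE6 hD, psiI]
      have p8 : ∀ w : ℂ, w ^ 8 = (w ^ 4) ^ 2 := fun w => by ring
      simp only [p8]
      rw [theta00_S s hs, theta01_S s hs, theta10_S s hs, theta00_axis, theta01_axis, theta10_axis]
      rw [show (t : ℂ) = 1 / s by rw [hst]; push_cast; rfl]
      push_cast
      have h01 : (R01 s : ℂ) ≠ 0 := by
        have h := R01_bounds s hs _ rfl (by linarith)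
        have h' := tail_bound _ hp hp1
        have : 0 < R01 s := by nlinarith [(abs_le.1 h).1]
        exact_mod_cast this.ne'
      have h00 : (R00 s : ℂ) ≠ 0 := by
        have : 0 < R00 s := by linarith [R00_lower s hs]
        exact_mod_cast this.ne'
      rw [hst]
      push_cast
      field_simp
  rw [hB]
  exact ⟨Complex.ofReal_im x, by rwa [Complex.ofReal_re]⟩
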